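/- arXiv:2602.12901 — 3 statements merged into one kernel-verified Lean document; each statement's English description precedes it below -/
import Mathlib

section
/- Let d ≥ 1 and work in ℝ^d with the Euclidean inner product and norm. Let θ* , θ̃ ∈ ℝ^d with ‖θ*‖ = 1, let 0 ≤ α < 1 and 0 ≤ γ ≤ 1, and suppose ‖θ̃ − θ*‖ ≤ α (so θ̃ ≠ 0). If x ∈ ℝ^d satisfies ‖x‖ ≤ 1 and x is γ-good for θ̃, then ‖θ* − x‖ ≤ √(2 + 2α√(1−γ²) − 2γ√(1−α²)). -/
open scoped RealInnerProductSpace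

/-!
The bound is the chord length `√(2 - 2 cos φ)` for `φ = arcsin α + arccos γ`: the estimate makes an
angle at most `arcsin α` with the objective, a `γ`-good arm makes an angle at most `arccos γ` with
the estimate, and angles satisfy the triangle inequality. Arms shorter than a unit vector are no
farther away than the chord because goodness forces `cos φ ≤ γ ≤ ‖x‖`.
-/

open InnerProductGeometry

theorem cos_arcsin_add_arccos {a b : ℝ} (ha₁ : -1 ≤ a) (ha₂ : a ≤ 1) (hb₁ : -1 ≤ b)
    (hb₂ : b ≤ 1) :
    Real.cos (Real.arcsin a + Real.arccos b) = √(1 - a ^ 2) * b - a * √(1 - b ^ 2) := by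
  rw [Real.cos_add, Real.cos_arcsin, Real.cos_arccos hb₁ hb₂, Real.sin_arcsin ha₁ ha₂,
    Real.sin_arccos]

theorem ne_zero_of_norm_sub_lt_norm {E : Type*} [SeminormedAddCommGroup E] {x y : E}
    (h : ‖x - y‖ < ‖y‖) : x ≠ 0 := by
  rintro rfl
  simp at h

section InnerProductSpace

variable {E : Type*} [NormedAddCommGroup E] [InnerProductSpace ℝ E] {x y : E} {r γ φ : ℝ}

theorem sqrt_one_sub_sq_mul_norm_mul_norm_le_inner (hr : r ^ 2 ≤ 1)
    (hxy : ‖x - y‖ ≤ r * ‖x‖) : √(1 - r ^ 2) * (‖x‖ * ‖y‖) ≤ ⟪x, y⟫ := by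
  have hsqrt : √(1 - r ^ 2) ^ 2 = 1 - r ^ 2 := Real.sq_sqrt (sub_nonneg.mpr hr)
  have hsub : ‖x‖ ^ 2 - 2 * ⟪x, y⟫ + ‖y‖ ^ 2 ≤ (r * ‖x‖) ^ 2 := by
    rw [← norm_sub_sq_real]
    gcongr
  have amgm := two_mul_le_add_sq (√(1 - r ^ 2) * ‖x‖) ‖y‖
  rw [mul_pow, hsqrt] at amgm
  linarith

theorem angle_le_arcsin_of_norm_sub_le (hy : y ≠ 0) (hr : r ≤ 1) (hxy : ‖x - y‖ ≤ r * ‖x‖) :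
    angle x y ≤ Real.arcsin r := by
  have hx : x ≠ 0 := by
    rintro rfl
    simp [hy] at hxy
  have hr₀ : 0 ≤ r :=
    nonneg_of_mul_nonneg_left ((norm_nonneg _).trans hxy) (norm_pos_iff.mpr hx)
  rw [Real.arcsin_eq_arccos hr₀]
  refine Real.arccos_le_arccos ?_
  rw [le_div_iff₀ (by positivity)]
  exact sqrt_one_sub_sq_mul_norm_mul_norm_le_inner (pow_le_one₀ hr₀ hr) hxy

theorem le_norm_of_mul_norm_le_inner (hy : y ≠ 0) (h : γ * ‖y‖ ≤ ⟪x, y⟫) : γ ≤ ‖x‖ :=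
  le_of_mul_le_mul_right (h.trans (real_inner_le_norm x y)) (norm_pos_iff.mpr hy)

theorem angle_le_arccos_of_mul_norm_le_inner (hy : y ≠ 0) (hx : ‖x‖ ≤ 1) (hγ : 0 ≤ γ)
    (h : γ * ‖y‖ ≤ ⟪x, y⟫) : angle x y ≤ Real.arccos γ := by
  refine Real.arccos_le_arccos ?_
  rcases eq_or_ne x 0 with rfl | hx₀
  · simpa using le_norm_of_mul_norm_le_inner hy h
  · rw [le_div_iff₀ (by positivity)]
    calc γ * (‖x‖ * ‖y‖) ≤ γ * (1 * ‖y‖) := by gcongr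
      _ = γ * ‖y‖ := by rw [one_mul]
      _ ≤ ⟪x, y⟫ := h

theorem norm_sub_le_sqrt_of_angle_le (hx : ‖x‖ = 1) (hy : ‖y‖ ≤ 1) (hφ : φ ≤ Real.pi)
    (hangle : angle x y ≤ φ) (hcos : Real.cos φ ≤ ‖y‖) :
    ‖x - y‖ ≤ √(2 - 2 * Real.cos φ) := by
  have hcos_angle : Real.cos φ ≤ Real.cos (angle x y) :=
    Real.cos_le_cos_of_nonneg_of_le_pi (angle_nonneg x y) hφ hangle
  have hchord : 0 ≤ (1 - ‖y‖) * (1 + ‖y‖ - 2 * Real.cos φ) :=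
    mul_nonneg (by linarith) (by linarith)
  refine Real.le_sqrt_of_sq_le ?_
  calc ‖x - y‖ ^ 2 = 1 + ‖y‖ ^ 2 - 2 * ‖y‖ * Real.cos (angle x y) := by
        rw [sq, norm_sub_sq_eq_norm_sq_add_norm_sq_sub_two_mul_norm_mul_norm_mul_cos_angle, hx]
        ring
    _ ≤ 1 + ‖y‖ ^ 2 - 2 * ‖y‖ * Real.cos φ := by gcongr
    _ ≤ 2 - 2 * Real.cos φ := by linarith

theorem dist_good_arm_general (θstar θtil x : E) (α γ : ℝ) (hθstar : ‖θstar‖ = 1)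
    (hθtil : θtil ≠ 0) (hα1 : α ≤ 1) (hγ0 : 0 ≤ γ) (hclose : ‖θtil - θstar‖ ≤ α)
    (hx : ‖x‖ ≤ 1) (hgood : γ * ‖θtil‖ ≤ ⟪x, θtil⟫) :
    ‖θstar - x‖ ≤ √(2 + 2 * α * √(1 - γ ^ 2) - 2 * γ * √(1 - α ^ 2)) := by
  have hα0 : 0 ≤ α := (norm_nonneg _).trans hclose
  have hγx : γ ≤ ‖x‖ := le_norm_of_mul_norm_le_inner hθtil hgood
  have hγ1 : γ ≤ 1 := hγx.trans hx
  set φ := Real.arcsin α + Real.arccos γ with hφ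
  have hφ_le : φ ≤ Real.pi := by
    linarith [Real.arcsin_le_pi_div_two α, Real.arccos_le_pi_div_two.mpr hγ0]
  have hangle : angle θstar x ≤ φ :=
    calc angle θstar x ≤ angle θstar θtil + angle θtil x := angle_le_angle_add_angle _ _ _
      _ ≤ φ := add_le_add
        (angle_le_arcsin_of_norm_sub_le hθtil hα1 (by rwa [norm_sub_rev, hθstar, mul_one]))
        (angle_comm θtil x ▸ angle_le_arccos_of_mul_norm_le_inner hθtil hx hγ0 hgood)
  have hcos : Real.cos φ ≤ γ :=
    calc Real.cos φ ≤ Real.cos (Real.arccos γ) := Real.cos_le_cos_of_nonneg_of_le_pi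
          (Real.arccos_nonneg γ) hφ_le (le_add_of_nonneg_left (Real.arcsin_nonneg.mpr hα0))
      _ = γ := Real.cos_arccos (by linarith) hγ1
  convert norm_sub_le_sqrt_of_angle_le hθstar hx hφ_le hangle (hcos.trans hγx) using 2
  rw [hφ, cos_arcsin_add_arccos (by linarith) hα1 (by linarith) hγ1]
  ring

end InnerProductSpace

/-- A γ-good arm for an α-accurate estimate of a unit objective vector lies within
distance √(2 + 2α√(1−γ²) − 2γ√(1−α²)) of the true objective vector. -/
theorem dist_good_arm (d : ℕ) (hd : 1 ≤ d)
    (θstar θtil x : EuclideanSpace ℝ (Fin d)) (α γ : ℝ)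
    (hθstar : ‖θstar‖ = 1) (hα0 : 0 ≤ α) (hα1 : α < 1)
    (hγ0 : 0 ≤ γ) (hγ1 : γ ≤ 1)
    (hclose : ‖θtil - θstar‖ ≤ α)
    (hx : ‖x‖ ≤ 1) (hgood : γ * ‖θtil‖ ≤ ⟪x, θtil⟫) :
    ‖θstar - x‖ ≤
      Real.sqrt (2 + 2 * α * Real.sqrt (1 - γ ^ 2) - 2 * γ * Real.sqrt (1 - α ^ 2)) :=
  have hθtil : θtil ≠ 0 := ne_zero_of_norm_sub_lt_norm (hθstar.symm ▸ hclose.trans_lt hα1)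
  dist_good_arm_general θstar θtil x α γ hθstar hθtil hα1.le hγ0 hclose hx hgood
end

section
/- Let 0 < λ ≤ 1 and 0 ≤ γ ≤ 1, and define ψ(λ, γ) := √(λ²/9 − λ⁴/324)·γ − (1 − λ²/18)·√(1−γ²). If 0 ≤ α ≤ ψ(λ, γ) (and α ≤ 1), then λ − 2√(2 + 2α√(1−γ²) − 2γ√(1−α²)) ≥ λ/3. -/
/-- The threshold `ψ(λ, γ)` of Remark `exchange_alpha`. -/
noncomputable def psi (lam γ : ℝ) : ℝ :=
  Real.sqrt (lam ^ 2 / 9 - lam ^ 4 / 324) * γ - (1 - lam ^ 2 / 18) * Real.sqrt (1 - γ ^ 2)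

/-!
Suppose `λ ≤ 6` and put `γ = cos g`, `α = sin a` and `1 - λ² / 18 = cos t` with `g, t ∈ [0, π]` and
`a ∈ [0, π / 2]`. Then `ψ(λ, γ) = sin (t - g)`, so `α ≤ ψ(λ, γ)` forces `g + a ≤ t`, and the
radicand is the squared chord `2 - 2 cos (g + a) ≤ 2 - 2 cos t = (λ / 3)²`. For `λ > 6` it suffices
that every chord of the unit circle has length at most `2`.
-/

open Real

theorem nonneg_of_sin_nonneg_of_neg_pi_lt {θ : ℝ} (hθ : -π < θ) (hsin : 0 ≤ sin θ) : 0 ≤ θ :=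
  le_of_not_gt fun hneg ↦ hsin.not_gt (sin_neg_of_neg_of_neg_pi_lt hneg hθ)

theorem arcsin_le_of_le_sin {x θ : ℝ} (hθ : -(π / 2) ≤ θ) (hx : x ≤ sin θ) : arcsin x ≤ θ := by
  rcases lt_or_ge θ (π / 2) with hlt | hge
  · exact (arcsin_le_iff_le_sin' ⟨hθ, hlt⟩).2 hx
  · exact (arcsin_le_pi_div_two x).trans hge

theorem cos_le_cos_add_arcsin_of_le_sin_sub {g t x : ℝ} (hg : 0 ≤ g) (ht : t ≤ π)
    (hgt : -π < t - g) (hx0 : 0 ≤ x) (hx : x ≤ sin (t - g)) : cos t ≤ cos (g + arcsin x) := by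
  have hsub : 0 ≤ t - g := nonneg_of_sin_nonneg_of_neg_pi_lt hgt (hx0.trans hx)
  have harcsin : arcsin x ≤ t - g := arcsin_le_of_le_sin (by linarith [pi_pos]) hx
  exact cos_le_cos_of_nonneg_of_le_pi (add_nonneg hg (arcsin_nonneg.2 hx0)) ht (by linarith)

theorem cos_arccos_add_arcsin {x y : ℝ} (hx : x ∈ Set.Icc (-1) 1) (hy : y ∈ Set.Icc (-1) 1) :
    cos (arccos x + arcsin y) = x * √(1 - y ^ 2) - √(1 - x ^ 2) * y := by
  rw [cos_add, cos_arccos hx.1 hx.2, cos_arcsin, sin_arccos, sin_arcsin hy.1 hy.2]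

theorem psi_eq_sin_arccos_sub_arccos {lam γ : ℝ} (hlam : lam ^ 2 ≤ 36)
    (hγ : γ ∈ Set.Icc (-1) 1) : psi lam γ = sin (arccos (1 - lam ^ 2 / 18) - arccos γ) := by
  have hcos : cos (arccos (1 - lam ^ 2 / 18)) = 1 - lam ^ 2 / 18 :=
    cos_arccos (by linarith) (by linarith [sq_nonneg lam])
  have hsin : lam ^ 2 / 9 - lam ^ 4 / 324 = 1 - (1 - lam ^ 2 / 18) ^ 2 := by ring
  rw [psi, hsin, sin_sub, sin_arccos, sin_arccos, hcos, cos_arccos hγ.1 hγ.2]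

theorem one_sub_sq_div_le_cos_arccos_add_arcsin {lam γ α : ℝ} (hlam : 0 < lam)
    (hγ : γ ∈ Set.Icc (-1) 1) (hα0 : 0 ≤ α) (hαψ : α ≤ psi lam γ) :
    1 - lam ^ 2 / 18 ≤ cos (arccos γ + arcsin α) := by
  rcases le_or_gt (lam ^ 2) 36 with hle | hgt
  · have hlt_one : 1 - lam ^ 2 / 18 < 1 := by linarith [pow_pos hlam 2]
    have hangle : -π < arccos (1 - lam ^ 2 / 18) - arccos γ := by
      linarith [arccos_pos.2 hlt_one, arccos_le_pi γ]
    rw [psi_eq_sin_arccos_sub_arccos hle hγ] at hαψ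
    calc 1 - lam ^ 2 / 18 = cos (arccos (1 - lam ^ 2 / 18)) :=
          (cos_arccos (by linarith) hlt_one.le).symm
      _ ≤ cos (arccos γ + arcsin α) :=
          cos_le_cos_add_arcsin_of_le_sin_sub (arccos_nonneg γ) (arccos_le_pi _) hangle hα0 hαψ
  · linarith [neg_one_le_cos (arccos γ + arcsin α)]

theorem exchange_alpha_general {lam γ α : ℝ} (hlam : 0 < lam) (hγ : γ ∈ Set.Icc (-1) 1)
    (hα : α ∈ Set.Icc 0 1) (hαψ : α ≤ psi lam γ) :
    lam / 3 ≤ lam - 2 * √(2 + 2 * α * √(1 - γ ^ 2) - 2 * γ * √(1 - α ^ 2)) := by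
  have hcos := one_sub_sq_div_le_cos_arccos_add_arcsin hlam hγ hα.1 hαψ
  rw [cos_arccos_add_arcsin hγ ⟨by linarith [hα.1], hα.2⟩] at hcos
  have hsqrt : √(2 + 2 * α * √(1 - γ ^ 2) - 2 * γ * √(1 - α ^ 2)) ≤ lam / 3 :=
    sqrt_le_iff.2 ⟨by positivity, by linarith⟩
  linarith

/-- Whenever `α ≤ ψ(λ, γ)`, the minimum-eigenvalue increment factor
`λ − 2√(2 + 2α√(1−γ²) − 2γ√(1−α²))` is at least `λ/3`. -/
theorem exchange_alpha (lam γ α : ℝ) (hlam0 : 0 < lam) (hlam1 : lam ≤ 1)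
    (hγ0 : 0 ≤ γ) (hγ1 : γ ≤ 1) (hα0 : 0 ≤ α) (hαψ : α ≤ psi lam γ) (hα1 : α ≤ 1) :
    lam / 3 ≤
      lam - 2 * Real.sqrt (2 + 2 * α * Real.sqrt (1 - γ ^ 2) - 2 * γ * Real.sqrt (1 - α ^ 2)) := by
  exact exchange_alpha_general hlam0 ⟨by linarith, hγ1⟩ ⟨hα0, hα1⟩ hαψ
end

section
/- Let θ_1, …, θ_M ∈ ℝ^d be unit vectors such that for every unit vector u ∈ ℝ^d, ∑_{m=1}^M ⟨u, θ_m⟩² ≥ λM (i.e., the smallest eigenvalue of ∑_m θ_m θ_mᵀ is at least λM), where λ > 0. Let 0 ≤ α < 1 and 0 ≤ γ ≤ 1, let θ̃_1, …, θ̃_M ∈ ℝ^d satisfy ‖θ̃_m − θ_m‖ ≤ α for each m, and let x_1, …, x_M ∈ ℝ^d satisfy ‖x_m‖ ≤ 1 and x_m is γ-good for θ̃_m for each m. Then for every unit vector u ∈ ℝ^d, ∑_{m=1}^M ⟨u, x_m⟩² ≥ (λ − 2√(2 + 2α√(1−γ²) − 2γ√(1−α²)))·M; equivalently, the smallest eigenvalue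 of ∑_m x_m x_mᵀ is at least (λ − 2√(2 + 2α√(1−γ²) − 2γ√(1−α²)))·M. -/
open scoped RealInnerProductSpace

/-!
Let `v` be an estimate of a unit vector `θ` with `‖v - θ‖ ≤ α`. The angle between `θ` and `v` is at
most `arcsin α`, and the angle between `v` and a `γ`-good unit vector `x` is at most `arccos γ`.
As long as these angles add up to at most `π`, that is `0 ≤ γ + √(1 - α²)`, it follows that
`⟪x, θ⟫ ≥ cos (arccos γ + arcsin α) = γ √(1 - α²) - α √(1 - γ²)`; splitting off the components
orthogonal to `v` extends this to `‖x‖ ≤ 1`. This bounds `‖x - θ‖`, and the quadratic form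
`x ↦ ⟪u, x⟫²` is `2`-Lipschitz on the unit ball when `‖u‖ ≤ 1`.
-/

section InnerProductSpace

open Real

-- Both sides are cosines of sums: `arccos p + arccos q ≤ arccos a + arccos b ≤ π`.
lemma mul_sub_sqrt_mul_sqrt_le_of_le {a b p q : ℝ} (hap : a ≤ p) (hp : p ≤ 1) (hbq : b ≤ q)
    (hq : q ≤ 1) (hab : 0 ≤ a + b) :
    a * b - √(1 - a ^ 2) * √(1 - b ^ 2) ≤ p * q - √(1 - p ^ 2) * √(1 - q ^ 2) := by
  have cos_arccos_add_arccos {s t : ℝ} (hs : -1 ≤ s) (hs' : s ≤ 1) (ht : -1 ≤ t) (ht' : t ≤ 1) :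
      cos (arccos s + arccos t) = s * t - √(1 - s ^ 2) * √(1 - t ^ 2) := by
    rw [cos_add, cos_arccos hs hs', cos_arccos ht ht', sin_arccos, sin_arccos]
  have sum_le_pi : arccos a + arccos b ≤ π := by
    have : arccos b ≤ arccos (-a) := arccos_le_arccos (by linarith)
    rw [arccos_neg] at this
    linarith
  rw [← cos_arccos_add_arccos, ← cos_arccos_add_arccos]
  · exact cos_le_cos_of_nonneg_of_le_pi (add_nonneg (arccos_nonneg p) (arccos_nonneg q)) sum_le_pi
      (add_le_add (arccos_le_arccos hap) (arccos_le_arccos hbq))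
  all_goals linarith

variable {E : Type*} [NormedAddCommGroup E] [InnerProductSpace ℝ E] {u v w x y : E}
  {a b c r α γ : ℝ}

lemma inner_sub_inner_smul_sub_inner_smul (hw : ‖w‖ = 1) (x y : E) :
    ⟪x - ⟪x, w⟫ • w, y - ⟪y, w⟫ • w⟫ = ⟪x, y⟫ - ⟪x, w⟫ * ⟪y, w⟫ := by
  simp only [inner_sub_left, inner_sub_right, real_inner_smul_left, real_inner_smul_right,
    real_inner_self_eq_norm_sq, hw, real_inner_comm y w]
  ring

lemma norm_sub_inner_smul_le_sqrt (hw : ‖w‖ = 1) (hx : ‖x‖ ≤ 1) :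
    ‖x - ⟪x, w⟫ • w‖ ≤ √(1 - ⟪x, w⟫ ^ 2) := by
  apply le_sqrt_of_sq_le
  rw [← real_inner_self_eq_norm_sq, inner_sub_inner_smul_sub_inner_smul hw,
    real_inner_self_eq_norm_sq, ← sq]
  gcongr
  exact pow_le_one₀ (norm_nonneg x) hx

-- Cauchy–Schwarz for the components of `x` and `y` orthogonal to `w`.
lemma inner_mul_inner_sub_sqrt_mul_sqrt_le_inner (hw : ‖w‖ = 1) (hx : ‖x‖ ≤ 1) (hy : ‖y‖ ≤ 1) :
    ⟪x, w⟫ * ⟪y, w⟫ - √(1 - ⟪x, w⟫ ^ 2) * √(1 - ⟪y, w⟫ ^ 2) ≤ ⟪x, y⟫ := by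
  have cauchy_schwarz :=
    neg_le_of_abs_le (abs_real_inner_le_norm (x - ⟪x, w⟫ • w) (y - ⟪y, w⟫ • w))
  rw [inner_sub_inner_smul_sub_inner_smul hw] at cauchy_schwarz
  have norms_le : ‖x - ⟪x, w⟫ • w‖ * ‖y - ⟪y, w⟫ • w‖ ≤
      √(1 - ⟪x, w⟫ ^ 2) * √(1 - ⟪y, w⟫ ^ 2) := by
    gcongr <;> exact norm_sub_inner_smul_le_sqrt hw ‹_›
  linarith

lemma mul_sub_sqrt_mul_sqrt_le_inner (hv : v ≠ 0) (hx : ‖x‖ ≤ 1) (hy : ‖y‖ ≤ 1)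
    (hxv : a * ‖v‖ ≤ ⟪x, v⟫) (hyv : b * ‖v‖ ≤ ⟪y, v⟫) (hab : 0 ≤ a + b) :
    a * b - √(1 - a ^ 2) * √(1 - b ^ 2) ≤ ⟪x, y⟫ := by
  obtain ⟨w, hw, inner_w⟩ : ∃ w : E, ‖w‖ = 1 ∧ ∀ z, ⟪z, w⟫ = ⟪z, v⟫ / ‖v‖ :=
    ⟨‖v‖⁻¹ • v, norm_smul_inv_norm hv, fun z => by rw [real_inner_smul_right, inv_mul_eq_div]⟩
  have le_inner_w {s : ℝ} {z : E} (hz : s * ‖v‖ ≤ ⟪z, v⟫) : s ≤ ⟪z, w⟫ := by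
    rwa [inner_w, le_div_iff₀ (norm_pos_iff.mpr hv)]
  have inner_w_le_one {z : E} (hz : ‖z‖ ≤ 1) : ⟪z, w⟫ ≤ 1 := by
    simpa [hw] using (real_inner_le_norm z w).trans (mul_le_of_le_one_left (norm_nonneg w) hz)
  calc a * b - √(1 - a ^ 2) * √(1 - b ^ 2)
      ≤ ⟪x, w⟫ * ⟪y, w⟫ - √(1 - ⟪x, w⟫ ^ 2) * √(1 - ⟪y, w⟫ ^ 2) :=
        mul_sub_sqrt_mul_sqrt_le_of_le (le_inner_w hxv) (inner_w_le_one hx) (le_inner_w hyv)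
          (inner_w_le_one hy) hab
    _ ≤ ⟪x, y⟫ := inner_mul_inner_sub_sqrt_mul_sqrt_le_inner hw hx hy

lemma sqrt_one_sub_sq_mul_norm_le_inner (hy : ‖y‖ = 1) (hα : α ≤ 1) (hvy : ‖v - y‖ ≤ α) :
    √(1 - α ^ 2) * ‖v‖ ≤ ⟪y, v⟫ := by
  have hα0 : 0 ≤ α := (norm_nonneg _).trans hvy
  have sq_sqrt_eq : √(1 - α ^ 2) ^ 2 = 1 - α ^ 2 :=
    sq_sqrt (sub_nonneg.mpr (pow_le_one₀ hα0 hα))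
  have dist_sq_le : ‖v - y‖ ^ 2 ≤ α ^ 2 := by gcongr
  rw [norm_sub_sq_real, hy, real_inner_comm] at dist_sq_le
  have am_gm := two_mul_le_add_sq √(1 - α ^ 2) ‖v‖
  linarith

lemma norm_sub_le_sqrt_of_le_inner (hx : ‖x‖ ≤ 1) (hy : ‖y‖ ≤ 1) (hc : c ≤ ⟪x, y⟫) :
    ‖x - y‖ ≤ √(2 - 2 * c) := by
  apply le_sqrt_of_sq_le
  rw [norm_sub_sq_real]
  linarith [pow_le_one₀ (n := 2) (norm_nonneg x) hx, pow_le_one₀ (n := 2) (norm_nonneg y) hy]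

lemma norm_sub_le_sqrt_of_good (hy : ‖y‖ = 1) (hα : α < 1) (hγ : 0 ≤ γ + √(1 - α ^ 2))
    (hvy : ‖v - y‖ ≤ α) (hx : ‖x‖ ≤ 1) (hxv : γ * ‖v‖ ≤ ⟪x, v⟫) :
    ‖x - y‖ ≤ √(2 + 2 * α * √(1 - γ ^ 2) - 2 * γ * √(1 - α ^ 2)) := by
  have hα0 : 0 ≤ α := (norm_nonneg _).trans hvy
  have hv : v ≠ 0 := by
    rintro rfl
    rw [zero_sub, norm_neg, hy] at hvy
    exact hvy.not_gt hα
  have sin_eq : √(1 - √(1 - α ^ 2) ^ 2) = α := by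
    rw [sq_sqrt (sub_nonneg.mpr (pow_le_one₀ hα0 hα.le)), sub_sub_cancel, sqrt_sq hα0]
  have inner_ge := mul_sub_sqrt_mul_sqrt_le_inner hv hx hy.le hxv
    (sqrt_one_sub_sq_mul_norm_le_inner hy hα.le hvy) hγ
  rw [sin_eq] at inner_ge
  convert norm_sub_le_sqrt_of_le_inner hx hy.le inner_ge using 2
  ring

lemma inner_sq_sub_inner_sq_le (u x y : E) :
    ⟪u, x⟫ ^ 2 - ⟪u, y⟫ ^ 2 ≤ ‖u‖ ^ 2 * (‖x + y‖ * ‖x - y‖) :=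
  calc ⟪u, x⟫ ^ 2 - ⟪u, y⟫ ^ 2
      = ⟪u, x + y⟫ * ⟪u, x - y⟫ := by rw [sq_sub_sq, inner_add_right, inner_sub_right]
    _ ≤ |⟪u, x + y⟫| * |⟪u, x - y⟫| := by rw [← abs_mul]; exact le_abs_self _
    _ ≤ (‖u‖ * ‖x + y‖) * (‖u‖ * ‖x - y‖) := by gcongr <;> exact abs_real_inner_le_norm _ _
    _ = ‖u‖ ^ 2 * (‖x + y‖ * ‖x - y‖) := by ring

lemma inner_sq_sub_two_mul_le_inner_sq (hu : ‖u‖ ≤ 1) (hx : ‖x‖ ≤ 1) (hy : ‖y‖ ≤ 1)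
    (hxy : ‖x - y‖ ≤ r) : ⟪u, y⟫ ^ 2 - 2 * r ≤ ⟪u, x⟫ ^ 2 := by
  have norm_add_le_two : ‖y + x‖ ≤ 2 := by linarith [norm_add_le y x]
  have : ⟪u, y⟫ ^ 2 - ⟪u, x⟫ ^ 2 ≤ 2 * r :=
    calc ⟪u, y⟫ ^ 2 - ⟪u, x⟫ ^ 2
        ≤ ‖u‖ ^ 2 * (‖y + x‖ * ‖y - x‖) := inner_sq_sub_inner_sq_le u y x
      _ ≤ ‖y + x‖ * ‖y - x‖ :=
        mul_le_of_le_one_left (by positivity) (pow_le_one₀ (norm_nonneg u) hu)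
      _ ≤ 2 * r := by rw [norm_sub_rev y x]; gcongr
  linarith

theorem mineigen_onecycle_general {ι : Type*} [Fintype ι] {lam : ℝ} {θ θtil x : ι → E}
    (hu : ‖u‖ ≤ 1) (hθunit : ∀ i, ‖θ i‖ = 1)
    (hθlam : lam * Fintype.card ι ≤ ∑ i, ⟪u, θ i⟫ ^ 2)
    (hα : α < 1) (hγ : 0 ≤ γ + √(1 - α ^ 2))
    (hest : ∀ i, ‖θtil i - θ i‖ ≤ α) (hxn : ∀ i, ‖x i‖ ≤ 1)
    (hgood : ∀ i, γ * ‖θtil i‖ ≤ ⟪x i, θtil i⟫) :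
    (lam - 2 * √(2 + 2 * α * √(1 - γ ^ 2) - 2 * γ * √(1 - α ^ 2))) * Fintype.card ι ≤
      ∑ i, ⟪u, x i⟫ ^ 2 := by
  set R := √(2 + 2 * α * √(1 - γ ^ 2) - 2 * γ * √(1 - α ^ 2))
  have norm_sub_le (i : ι) : ‖x i - θ i‖ ≤ R :=
    norm_sub_le_sqrt_of_good (hθunit i) hα hγ (hest i) (hxn i) (hgood i)
  calc (lam - 2 * R) * Fintype.card ι
      = lam * Fintype.card ι - Fintype.card ι * (2 * R) := by ring
    _ ≤ ∑ i, ⟪u, θ i⟫ ^ 2 - Fintype.card ι * (2 * R) := by gcongr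
    _ = ∑ i, (⟪u, θ i⟫ ^ 2 - 2 * R) := by
      rw [Finset.sum_sub_distrib, Finset.sum_const, Finset.card_univ, nsmul_eq_mul]
    _ ≤ ∑ i, ⟪u, x i⟫ ^ 2 := by
      gcongr with i
      exact inner_sq_sub_two_mul_le_inner_sq hu (hxn i) (hθunit i).le (norm_sub_le i)

end InnerProductSpace

/-- Increment of the minimum eigenvalue of the Gram matrix over one round-robin cycle:
if for each objective `m` a `γ`-good arm for an `α`-accurate estimate `θtil m` of the unit
objective `θ m` is selected, then the Gram matrix quadratic form of the selected arms in
any unit direction is at least `(λ − 2√(2 + 2α√(1−γ²) − 2γ√(1−α²)))·M`. -/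
theorem mineigen_onecycle (d M : ℕ) (lam α γ : ℝ) (hlam : 0 < lam)
    (θ θtil x : Fin M → EuclideanSpace ℝ (Fin d))
    (hθunit : ∀ m, ‖θ m‖ = 1)
    (hθlam : ∀ u : EuclideanSpace ℝ (Fin d), ‖u‖ = 1 → lam * M ≤ ∑ m, ⟪u, θ m⟫ ^ 2)
    (hα0 : 0 ≤ α) (hα1 : α < 1) (hγ0 : 0 ≤ γ) (hγ1 : γ ≤ 1)
    (hest : ∀ m, ‖θtil m - θ m‖ ≤ α)
    (hxn : ∀ m, ‖x m‖ ≤ 1)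
    (hgood : ∀ m, γ * ‖θtil m‖ ≤ ⟪x m, θtil m⟫) :
    ∀ u : EuclideanSpace ℝ (Fin d), ‖u‖ = 1 →
      (lam - 2 * Real.sqrt (2 + 2 * α * Real.sqrt (1 - γ ^ 2)
        - 2 * γ * Real.sqrt (1 - α ^ 2))) * M ≤ ∑ m, ⟪u, x m⟫ ^ 2 := by
  intro u hu
  simpa only [Fintype.card_fin] using mineigen_onecycle_general hu.le hθunit
    (by simpa only [Fintype.card_fin] using hθlam u hu) hα1 (by positivity) hest hxn hgood
end
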